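/- arXiv:1805.05460 — 2 statements merged into one kernel-verified Lean document; each statement's English description precedes it below -/
import Mathlib

section
/- Let p₀, p₁, p₂, p₃ be affinely independent points in ℝ³, let x₀, …, x₃ : ℝ³ → ℝ be the barycentric coordinate functions (the unique affine maps with x_i(p_j) = δ_{ij}), with constant gradients g_i = ∇x_i, and let W = 2( x₀ g₁ × g₂ + x₁ g₂ × g₀ + x₂ g₀ × g₁ ) be the Whitney face field of the face [p₀, p₁, p₂]. Then W has constant divergence, equal to div W = −6 / det M, where M is the 3×3 matrix with columns p₁ − p₀, p₂ − p₀, p₃ − p₀. -/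
/-- The constant gradient of an affine function `x : ℝ³ → ℝ`, as a vector. -/
noncomputable def bgrad (x : (Fin 3 → ℝ) →ᵃ[ℝ] ℝ) : Fin 3 → ℝ :=
  fun k => x.linear (Pi.single k 1)

/-- The Whitney face field of the face `[p_a, p_b, p_c]`, for barycentric coordinate
functions `x` of a tetrahedron:
`W = 2 (x_a ∇x_b × ∇x_c + x_b ∇x_c × ∇x_a + x_c ∇x_a × ∇x_b)`. -/
noncomputable def Wface (x : Fin 4 → ((Fin 3 → ℝ) →ᵃ[ℝ] ℝ)) (a b c : Fin 4)
    (y : Fin 3 → ℝ) : Fin 3 → ℝ :=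
  (2 : ℝ) • (x a y • crossProduct (bgrad (x b)) (bgrad (x c))
    + x b y • crossProduct (bgrad (x c)) (bgrad (x a))
    + x c y • crossProduct (bgrad (x a)) (bgrad (x b)))

/-!
Each term of `W` is an affine function times a constant vector, so its divergence is a gradient
paired with that vector; all three terms give the triple product `g₀ ⬝ᵥ g₁ ⨯₃ g₂`. Since
`∑ xᵢ = 1`, the gradients sum to zero and this triple product is `-det (g₁, g₂, g₃)`. Finally
`gᵢ ⬝ᵥ (pⱼ - p₀) = δᵢⱼ` for `i, j ≠ 0`, so the matrix with rows `g₁, g₂, g₃` is the inverse of `M`.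
-/

open scoped Matrix

section Divergence

variable {𝕜 ι : Type*} [NontriviallyNormedField 𝕜] [Fintype ι] [DecidableEq ι]

/-- The divergence `∑ i, ∂ᵢ Vᵢ` of a vector field `V` on `𝕜^ι` at `y`. A component that is not
differentiable at `y` contributes `0`. -/
noncomputable def divergence (V : (ι → 𝕜) → ι → 𝕜) (y : ι → 𝕜) : 𝕜 :=
  ∑ i, fderiv 𝕜 (fun z => V z i) y (Pi.single i 1)

theorem divergence_add {V W : (ι → 𝕜) → ι → 𝕜} {y : ι → 𝕜} (hV : DifferentiableAt 𝕜 V y)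
    (hW : DifferentiableAt 𝕜 W y) :
    divergence (V + W) y = divergence V y + divergence W y := by
  rw [differentiableAt_pi] at hV hW
  simp only [divergence, Pi.add_apply, fderiv_fun_add (hV _) (hW _), add_apply,
    Finset.sum_add_distrib]

theorem divergence_const_smul (c : 𝕜) (V : (ι → 𝕜) → ι → 𝕜) (y : ι → 𝕜) :
    divergence (c • V) y = c * divergence V y := by
  rw [divergence, divergence, Finset.mul_sum]
  refine Finset.sum_congr rfl fun i _ => ?_
  exact DFunLike.congr_fun (congrFun (fderiv_const_smul_field c) y) (Pi.single i 1)

theorem divergence_smul_const {f : (ι → 𝕜) → 𝕜} {y : ι → 𝕜} (hf : DifferentiableAt 𝕜 f y)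
    (v : ι → 𝕜) : divergence (fun z => f z • v) y = fderiv 𝕜 f y v := by
  conv_rhs => rw [pi_eq_sum_univ' v]
  simp only [divergence, Pi.smul_apply, smul_eq_mul, fderiv_mul_const hf, map_sum, map_smul,
    smul_apply]

end Divergence

theorem affineMap_hasFDerivAt {𝕜 E F : Type*} [NontriviallyNormedField 𝕜] [CompleteSpace 𝕜]
    [NormedAddCommGroup E] [NormedSpace 𝕜 E] [FiniteDimensional 𝕜 E]
    [NormedAddCommGroup F] [NormedSpace 𝕜 F] (f : E →ᵃ[𝕜] F) (y : E) :
    HasFDerivAt f (LinearMap.toContinuousLinearMap f.linear) y :=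
  ContinuousAffineMap.hasFDerivAt (f := ⟨f, f.continuous_of_finiteDimensional⟩)

theorem linearMap_single_dotProduct {R ι : Type*} [CommSemiring R] [Fintype ι] [DecidableEq ι]
    (f : (ι → R) →ₗ[R] R) (v : ι → R) : (fun i => f (Pi.single i 1)) ⬝ᵥ v = f v :=
  LinearMap.congr_fun ((dotProductEquiv R ι).apply_symm_apply f) v

theorem triple_product_eq_neg_of_add_eq_zero {R : Type*} [CommRing R] {t u v w : Fin 3 → R}
    (h : t + u + v + w = 0) : t ⬝ᵥ u ⨯₃ v = -(u ⬝ᵥ v ⨯₃ w) := by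
  have ht : t = -(u + v + w) := by linear_combination h
  calc t ⬝ᵥ u ⨯₃ v = -(w ⬝ᵥ u ⨯₃ v) := by
        simp only [ht, neg_dotProduct, add_dotProduct, dot_self_cross, dot_cross_self, zero_add]
    _ = -(u ⬝ᵥ v ⨯₃ w) := by rw [triple_product_permutation]

section BarycentricCoordinates

variable {k V P ι : Type*} [Ring k] [AddCommGroup V] [Module k V] [AddTorsor V P]

theorem eq_coord_of_apply_eq_ite [DecidableEq ι] (b : AffineBasis ι k P) {f : P →ᵃ[k] k} {i : ι}
    (hf : ∀ j, f (b j) = if i = j then 1 else 0) : f = b.coord i :=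
  AffineMap.ext_on b.tot (Set.forall_mem_range.2 fun j => (hf j).trans (b.coord_apply i j).symm)

theorem sum_coord_linear [Fintype ι] (b : AffineBasis ι k P) : ∑ i, (b.coord i).linear = 0 := by
  obtain ⟨q⟩ : Nonempty P := b.nonempty.map b
  ext v
  calc (∑ i, (b.coord i).linear) v = ∑ i, (b.coord i (v +ᵥ q) - b.coord i q) := by
        simp only [LinearMap.sum_apply, AffineMap.map_vadd, vadd_eq_add, add_sub_cancel_right]
    _ = 0 := by
        rw [Finset.sum_sub_distrib, b.sum_coord_apply_eq_one, b.sum_coord_apply_eq_one, sub_self]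

theorem coord_linear_matrix_mul_edge_matrix {R : Type*} [CommRing R] {n : ℕ}
    (b : AffineBasis (Fin (n + 1)) R (Fin n → R)) :
    (Matrix.of fun i l : Fin n => (b.coord i.succ).linear (Pi.single l 1)) *
      (Matrix.of fun i j : Fin n => b j.succ i - b 0 i) = 1 := by
  ext i j
  calc _ = (b.coord i.succ).linear (b j.succ -ᵥ b 0) := linearMap_single_dotProduct _ _
    _ = b.coord i.succ (b j.succ) - b.coord i.succ (b 0) := AffineMap.linearMap_vsub _ _ _
    _ = (1 : Matrix (Fin n) (Fin n) R) i j := by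
        simp only [b.coord_apply, Fin.succ_inj, Fin.succ_ne_zero, if_false, sub_zero,
          Matrix.one_apply]

theorem det_coord_linear_matrix {K : Type*} [Field K] {n : ℕ}
    (b : AffineBasis (Fin (n + 1)) K (Fin n → K)) :
    (Matrix.of fun i l : Fin n => (b.coord i.succ).linear (Pi.single l 1)).det =
      (Matrix.of fun i j : Fin n => b j.succ i - b 0 i).det⁻¹ := by
  refine eq_inv_of_mul_eq_one_left ?_
  rw [← Matrix.det_mul, coord_linear_matrix_mul_edge_matrix, Matrix.det_one]

end BarycentricCoordinates

theorem divergence_affineMap_smul_const (f : (Fin 3 → ℝ) →ᵃ[ℝ] ℝ) (v y : Fin 3 → ℝ) :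
    divergence (fun z => f z • v) y = bgrad f ⬝ᵥ v := by
  have hf := affineMap_hasFDerivAt f y
  rw [divergence_smul_const hf.differentiableAt, hf.fderiv]
  exact (linearMap_single_dotProduct f.linear v).symm

theorem divergence_Wface (x : Fin 4 → (Fin 3 → ℝ) →ᵃ[ℝ] ℝ) (a b c : Fin 4) (y : Fin 3 → ℝ) :
    divergence (Wface x a b c) y = 6 * (bgrad (x a) ⬝ᵥ bgrad (x b) ⨯₃ bgrad (x c)) := by
  let term (i j k : Fin 4) (z : Fin 3 → ℝ) : Fin 3 → ℝ := x i z • bgrad (x j) ⨯₃ bgrad (x k)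
  have term_differentiable (i j k) : DifferentiableAt ℝ (term i j k) y :=
    (affineMap_hasFDerivAt (x i) y).differentiableAt.smul_const _
  have divergence_term (i j k) :
      divergence (term i j k) y = bgrad (x i) ⬝ᵥ bgrad (x j) ⨯₃ bgrad (x k) :=
    divergence_affineMap_smul_const _ _ y
  have Wface_eq : Wface x a b c = (2 : ℝ) • (term a b c + term b c a + term c a b) := rfl
  rw [Wface_eq, divergence_const_smul,
    divergence_add ((term_differentiable a b c).add (term_differentiable b c a))
      (term_differentiable c a b),
    divergence_add (term_differentiable a b c) (term_differentiable b c a),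
    divergence_term, divergence_term, divergence_term,
    triple_product_permutation (bgrad (x c)), ← triple_product_permutation (bgrad (x a))]
  ring

theorem sum_bgrad_coord {ι : Type*} [Fintype ι] (b : AffineBasis ι ℝ (Fin 3 → ℝ)) :
    ∑ i, bgrad (b.coord i) = 0 := by
  ext l
  simpa only [bgrad, Finset.sum_apply, LinearMap.sum_apply, LinearMap.zero_apply,
    Pi.zero_apply] using LinearMap.congr_fun (sum_coord_linear b) (Pi.single l 1)

theorem triple_product_bgrad_coord (b : AffineBasis (Fin 4) ℝ (Fin 3 → ℝ)) :
    bgrad (b.coord 1) ⬝ᵥ bgrad (b.coord 2) ⨯₃ bgrad (b.coord 3) =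
      (Matrix.of fun i j : Fin 3 => b j.succ i - b 0 i).det⁻¹ := by
  rw [triple_product_eq_det, ← det_coord_linear_matrix]
  congr 1
  ext i l
  fin_cases i <;> rfl

/-- The Whitney face field `W_{[p₀,p₁,p₂]}` of a tetrahedron with affinely independent
vertices `p₀, p₁, p₂, p₃` has constant divergence `−6 / det M`, where `M` has columns
`p₁ − p₀, p₂ − p₀, p₃ − p₀`. -/
theorem whitney_face_field_div (p : Fin 4 → (Fin 3 → ℝ)) (hp : AffineIndependent ℝ p)
    (x : Fin 4 → ((Fin 3 → ℝ) →ᵃ[ℝ] ℝ))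
    (hx : ∀ i j, x i (p j) = if i = j then 1 else 0) :
    ∀ y : Fin 3 → ℝ,
      ∑ i : Fin 3, fderiv ℝ (fun z => Wface x 0 1 2 z i) y (Pi.single i 1)
        = -6 / (Matrix.of fun (i j : Fin 3) => p j.succ i - p 0 i).det := by
  intro y
  obtain ⟨b, rfl⟩ : ∃ b : AffineBasis (Fin 4) ℝ (Fin 3 → ℝ), ⇑b = p :=
    ⟨⟨p, hp, hp.affineSpan_eq_top_iff_card_eq_finrank_add_one.2 (by simp)⟩, rfl⟩
  obtain rfl : x = b.coord := funext fun i => eq_coord_of_apply_eq_ite b (hx i)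
  have sum_grad : bgrad (b.coord 0) + bgrad (b.coord 1) + bgrad (b.coord 2)
      + bgrad (b.coord 3) = 0 := by
    rw [← Fin.sum_univ_four fun i => bgrad (b.coord i), sum_bgrad_coord]
  calc divergence (Wface b.coord 0 1 2) y
      = 6 * (bgrad (b.coord 0) ⬝ᵥ bgrad (b.coord 1) ⨯₃ bgrad (b.coord 2)) :=
        divergence_Wface b.coord 0 1 2 y
    _ = 6 * -(bgrad (b.coord 1) ⬝ᵥ bgrad (b.coord 2) ⨯₃ bgrad (b.coord 3)) := by
        rw [triple_product_eq_neg_of_add_eq_zero sum_grad]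
    _ = -6 / (Matrix.of fun (i j : Fin 3) => b j.succ i - b 0 i).det := by
        rw [triple_product_bgrad_coord]
        ring
end

section
/- Let p₀, p₁, p₂, p₃ be affinely independent points in ℝ³ with barycentric coordinate functions x₀, …, x₃ and constant gradients g_i = ∇x_i, and for k = 0, 1, 2, 3 let W_{f_k} be the Whitney face field of the face f_k of the tetrahedron obtained by omitting the vertex p_k (vertices in increasing order). If real coefficients c₀, c₁, c₂, c₃ satisfy ∑_{k=0}^{3} c_k W_{f_k}(y) = 0 for every y in the convex hull of {p₀, p₁, p₂, p₃}, then c₀ = c₁ = c₂ = c₃ = 0. In particular, the four Whitney face fields of a tetrahedron are linearly independent. -/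
/-!
Each Whitney face field has the Raviart–Thomas form `W_{f_k}(y) = 2 T_k (y - p_k)`, where `T_k` is
the triple product of the gradients of the coordinates of the vertices of `f_k`: the `x_i` with
`i ≠ k` vanish at `p_k`, so `x_i(y) = g_i · (y - p_k)`, and Cramer's rule applies. Moreover
`T_k ≠ 0`, because these gradients are dual to the edges issuing from `p_k`. A combination
`∑ w_k (y - p_k)` that vanishes at two distinct points has `∑ w_k = 0`, hence vanishes identically,
and applying the linear part of `x_i` gives `w_i = 0`.
-/

open scoped Matrix

theorem smul_cross_add_smul_cross_add_smul_cross {R : Type*} [CommRing R] (u v w z : Fin 3 → R) :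
    (u ⬝ᵥ z) • (v ⨯₃ w) + (v ⬝ᵥ z) • (w ⨯₃ u) + (w ⬝ᵥ z) • (u ⨯₃ v) = (u ⬝ᵥ v ⨯₃ w) • z := by
  ext i
  fin_cases i <;> simp [cross_apply, dotProduct, Fin.sum_univ_three] <;> ring

theorem eq_zero_of_sum_smul_vsub_eq_zero {𝕜 V P ι : Type*} [Ring 𝕜] [IsDomain 𝕜] [AddCommGroup V]
    [Module 𝕜 V] [Module.IsTorsionFree 𝕜 V] [AddTorsor V P] [Fintype ι] [DecidableEq ι]
    {p : ι → P} {x : ι → P →ᵃ[𝕜] 𝕜} (hx : ∀ i j, x i (p j) = if i = j then 1 else 0)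
    {w : ι → 𝕜} {y z : P} (hyz : y ≠ z) (hy : ∑ j, w j • (y -ᵥ p j) = 0)
    (hz : ∑ j, w j • (z -ᵥ p j) = 0) (i : ι) : w i = 0 := by
  have sum_smul_vsub : (∑ j, w j) • (y -ᵥ z) = 0 := calc
    (∑ j, w j) • (y -ᵥ z) = ∑ j, w j • (y -ᵥ p j - (z -ᵥ p j)) := by
      simp only [Finset.sum_smul, vsub_sub_vsub_cancel_right]
    _ = 0 := by simp only [smul_sub, Finset.sum_sub_distrib, hy, hz, sub_zero]
  have sum_eq_zero : ∑ j, w j = 0 :=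
    (smul_eq_zero.mp sum_smul_vsub).resolve_right (vsub_ne_zero.mpr hyz)
  have apply_coord : (∑ j, w j) * x i y - w i = 0 := by
    simpa [hx, mul_sub, Finset.sum_mul] using congrArg (x i).linear hy
  simpa [sum_eq_zero] using apply_coord

theorem bgrad_dotProduct (x : (Fin 3 → ℝ) →ᵃ[ℝ] ℝ) (v : Fin 3 → ℝ) :
    bgrad x ⬝ᵥ v = x.linear v := by
  conv_rhs => rw [pi_eq_sum_univ' v]
  simp [bgrad, dotProduct, mul_comm]

theorem bgrad_dotProduct_sub (x : (Fin 3 → ℝ) →ᵃ[ℝ] ℝ) (u v : Fin 3 → ℝ) :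
    bgrad x ⬝ᵥ (u - v) = x u - x v :=
  (bgrad_dotProduct x _).trans (x.linearMap_vsub u v)

theorem triple_product_bgrad_ne_zero {x : Fin 3 → (Fin 3 → ℝ) →ᵃ[ℝ] ℝ} {v : Fin 3 → Fin 3 → ℝ}
    {q : Fin 3 → ℝ} (hv : ∀ i j, x i (v j) = if i = j then 1 else 0) (hq : ∀ i, x i q = 0) :
    bgrad (x 0) ⬝ᵥ bgrad (x 1) ⨯₃ bgrad (x 2) ≠ 0 := by
  have triple_product_eq : bgrad (x 0) ⬝ᵥ bgrad (x 1) ⨯₃ bgrad (x 2) =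
      (Matrix.of fun i => bgrad (x i)).det :=
    (triple_product_eq_det _ _ _).trans
      (congrArg Matrix.det (FinVec.etaExpand_eq fun i => bgrad (x i)))
  have mul_edges : (Matrix.of fun i => bgrad (x i)) * (Matrix.of fun j => v j - q)ᵀ = 1 := by
    ext i j
    change bgrad (x i) ⬝ᵥ (v j - q) = _
    rw [bgrad_dotProduct_sub, hv, hq, sub_zero, Matrix.one_apply]
  exact triple_product_eq ▸ Matrix.det_ne_zero_of_right_inverse mul_edges

theorem Wface_eq_smul_sub {x : Fin 4 → (Fin 3 → ℝ) →ᵃ[ℝ] ℝ} {a b c : Fin 4} {q : Fin 3 → ℝ}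
    (ha : x a q = 0) (hb : x b q = 0) (hc : x c q = 0) (y : Fin 3 → ℝ) :
    Wface x a b c y = (2 * (bgrad (x a) ⬝ᵥ bgrad (x b) ⨯₃ bgrad (x c))) • (y - q) := by
  rw [mul_smul, ← smul_cross_add_smul_cross_add_smul_cross]
  simp only [Wface, bgrad_dotProduct_sub, ha, hb, hc, sub_zero]

/-- The Whitney face field of the face opposite the `k`-th vertex of a tetrahedron; the remaining
vertices are enumerated in increasing order by `k.succAbove`. -/
noncomputable def oppositeWface (x : Fin 4 → (Fin 3 → ℝ) →ᵃ[ℝ] ℝ) (k : Fin 4) :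
    (Fin 3 → ℝ) → Fin 3 → ℝ :=
  Wface x (k.succAbove 0) (k.succAbove 1) (k.succAbove 2)

section Barycentric

variable {p : Fin 4 → Fin 3 → ℝ} {x : Fin 4 → (Fin 3 → ℝ) →ᵃ[ℝ] ℝ}

theorem exists_oppositeWface_eq_smul_sub (hx : ∀ i j, x i (p j) = if i = j then 1 else 0)
    (k : Fin 4) : ∃ r : ℝ, r ≠ 0 ∧ ∀ y, oppositeWface x k y = r • (y - p k) := by
  have coord_eq_zero (i : Fin 3) : x (k.succAbove i) (p k) = 0 := by
    rw [hx, if_neg (k.succAbove_ne i)]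
  have coord_vertex (i j : Fin 3) :
      x (k.succAbove i) (p (k.succAbove j)) = if i = j then 1 else 0 := by
    simp only [hx, Fin.succAbove_right_inj]
  exact ⟨_, mul_ne_zero two_ne_zero (triple_product_bgrad_ne_zero coord_vertex coord_eq_zero),
    Wface_eq_smul_sub (coord_eq_zero 0) (coord_eq_zero 1) (coord_eq_zero 2)⟩

theorem whitney_face_fields_linearIndependent_general
    (hx : ∀ i j, x i (p j) = if i = j then 1 else 0) {c : Fin 4 → ℝ} {y z : Fin 3 → ℝ}
    (hyz : y ≠ z) (hy : ∑ k, c k • oppositeWface x k y = 0)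
    (hz : ∑ k, c k • oppositeWface x k z = 0) (k : Fin 4) : c k = 0 := by
  choose r r_ne_zero oppositeWface_eq using exists_oppositeWface_eq_smul_sub hx
  simp only [oppositeWface_eq, smul_smul] at hy hz
  have coeff_eq_zero : c k * r k = 0 := eq_zero_of_sum_smul_vsub_eq_zero hx hyz hy hz k
  exact (mul_eq_zero.mp coeff_eq_zero).resolve_right (r_ne_zero k)

end Barycentric

/-- The four Whitney face fields of a tetrahedron (faces `f_k` omitting vertex `p_k`,
vertices in increasing order) are linearly independent: if a linear combination vanishes
on the convex hull of the vertices, all coefficients vanish. -/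
theorem whitney_face_fields_linearIndependent
    (p : Fin 4 → (Fin 3 → ℝ)) (hp : AffineIndependent ℝ p)
    (x : Fin 4 → ((Fin 3 → ℝ) →ᵃ[ℝ] ℝ))
    (hx : ∀ i j, x i (p j) = if i = j then 1 else 0)
    (c : Fin 4 → ℝ)
    (hc : ∀ y ∈ convexHull ℝ (Set.range p),
      c 0 • Wface x 1 2 3 y + c 1 • Wface x 0 2 3 y
        + c 2 • Wface x 0 1 3 y + c 3 • Wface x 0 1 2 y = 0) :
    ∀ k, c k = 0 := by
  have sum_eq_zero (j : Fin 4) : ∑ k, c k • oppositeWface x k (p j) = 0 :=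
    (Fin.sum_univ_four _).trans (hc _ (subset_convexHull ℝ _ ⟨j, rfl⟩))
  have vertices_ne : p 0 ≠ p 1 := hp.injective.ne zero_ne_one
  exact whitney_face_fields_linearIndependent_general hx vertices_ne (sum_eq_zero 0) (sum_eq_zero 1)
end
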